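/- Let the mixing coefficients of the transformed code C_1(n,k,η,t) satisfy e_j ∉ {0, 1} for all j = 1,…,η. Suppose a set S of k node indices consists of the union of ℓ complete groups (where group j is {(j−1)t+1,…,jt} for j ≤ η) together with k − ℓ·t nodes chosen from the last n − η·t nodes, for some 0 ≤ ℓ ≤ η. Then the F-linear map sending the message array s ∈ F^{t×k} to the t·k symbols stored in the nodes of S is injective; i.e., any such collection of k nodes can decode all t·k data symbols, regardless of the specific values of e_1,…,e_η. -/

import Mathlib

/-- The codeword symbol `c_h = (s · G)_h` of the underlying `(n,k)` MDS code. -/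
noncomputable def codewordSym {F : Type*} [Field F] {n k : ℕ}
    (G : Matrix (Fin k) (Fin n) F) (s : Fin k → F) (h : Fin n) : F :=
  ∑ i : Fin k, s i * G i h

/-- The symbol stored in row `ℓ` of node `m` of the transformed code `C₁(n,k,η,t)`:
for `m` among the first `η·t` nodes, with group index `j = ⌊m/t⌋`, in-group index
`i = m mod t` and companion node `⌊m/t⌋·t + ℓ`, the stored symbol is
`c^ℓ_m + c^i_{comp}` if `ℓ < i`, `c^i_m` if `ℓ = i`, and `c^ℓ_m + e_j·c^i_{comp}` if
`ℓ > i`; the remaining nodes `m ≥ η·t` store the plain codeword symbols `c^ℓ_m`.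
(Node and row indices are 0-based.) -/
noncomputable def storedC1 {F : Type*} [Field F] {n k : ℕ} (t η : ℕ) (ht : 0 < t)
    (hηt : η * t ≤ n) (G : Matrix (Fin k) (Fin n) F) (e : Fin η → F)
    (s : Fin t → Fin k → F) (m : Fin n) (ℓ : Fin t) : F :=
  if hm : (m : ℕ) < η * t then
    have hj : (m : ℕ) / t < η := by
      by_contra hcon
      push_neg at hcon
      have h1 : η * t ≤ (m : ℕ) / t * t := Nat.mul_le_mul_right t hcon
      have h2 : (m : ℕ) / t * t ≤ (m : ℕ) := Nat.div_mul_le_self _ _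
      omega
    have hcomp : (m : ℕ) / t * t + (ℓ : ℕ) < n := by
      have h3 : ((m : ℕ) / t + 1) * t ≤ η * t := Nat.mul_le_mul_right t hj
      have h4 : (m : ℕ) / t * t + t = ((m : ℕ) / t + 1) * t := by ring
      have h5 := ℓ.isLt
      omega
    have hi : (m : ℕ) % t < t := Nat.mod_lt _ ht
    let comp : Fin n := ⟨(m : ℕ) / t * t + (ℓ : ℕ), hcomp⟩
    if (ℓ : ℕ) < (m : ℕ) % t then
      codewordSym G (s ℓ) m + codewordSym G (s ⟨(m : ℕ) % t, hi⟩) comp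
    else if (ℓ : ℕ) = (m : ℕ) % t then
      codewordSym G (s ℓ) m
    else
      codewordSym G (s ℓ) m + e ⟨(m : ℕ) / t, hj⟩ * codewordSym G (s ⟨(m : ℕ) % t, hi⟩) comp
  else codewordSym G (s ℓ) m

/-- The `i`-th node of group `j` of the transformed code `C₁(n,k,η,t)`
(0-based: node `j·t + i`). -/
def groupNode {n : ℕ} (t η : ℕ) (hηt : η * t ≤ n) (j : Fin η) (i : Fin t) : Fin n :=
  ⟨(j : ℕ) * t + (i : ℕ), by
    have h1 : ((j : ℕ) + 1) * t ≤ η * t := Nat.mul_le_mul_right t j.isLt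
    have h2 : (j : ℕ) * t + t = ((j : ℕ) + 1) * t := by ring
    have h3 := i.isLt
    omega⟩

/-!
Inside a complete group the stored symbols decouple into pairs: for `ℓ < i`, node `i` stores
`x + y` in row `ℓ` and node `ℓ` stores `y + e_j x` in row `i`, where `x = c^ℓ` at node `i` and
`y = c^i` at node `ℓ`. This `2 × 2` system has determinant `1 - e_j ≠ 0`, so a complete group
reveals all its plain codeword symbols, as do the nodes outside the groups. Hence `S` reveals the
restriction to `S` of each of the `t` codewords, and the MDS property recovers the messages.
-/

theorem eq_and_eq_of_add_eq_of_add_mul_eq {R : Type*} [Ring R] [NoZeroDivisors R]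
    {a x y x' y' : R} (ha : a ≠ 1) (hsum : x + y = x' + y')
    (hmix : y + a * x = y' + a * x') : x = x' ∧ y = y' := by
  have hscaled : (a - 1) * x = (a - 1) * x' := by
    linear_combination (norm := noncomm_ring) hmix - hsum
  have hx : x = x' := mul_left_cancel₀ (sub_ne_zero.2 ha) hscaled
  exact ⟨hx, add_left_cancel (hx ▸ hsum)⟩

section GroupNode

variable {n t η : ℕ} (hηt : η * t ≤ n)

theorem groupNode_lt (j : Fin η) (i : Fin t) : (groupNode t η hηt j i : ℕ) < η * t :=
  calc (j : ℕ) * t + i < (j + 1) * t := by rw [Nat.succ_mul]; exact Nat.add_lt_add_left i.isLt _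
    _ ≤ η * t := Nat.mul_le_mul_right t j.isLt

theorem groupNode_div (j : Fin η) (i : Fin t) : (groupNode t η hηt j i : ℕ) / t = j := by
  simp only [groupNode, mul_comm _ t, Nat.mul_add_div i.pos, Nat.div_eq_of_lt i.isLt, add_zero]

theorem groupNode_mod (j : Fin η) (i : Fin t) : (groupNode t η hηt j i : ℕ) % t = i := by
  simp only [groupNode, mul_comm _ t, Nat.mul_add_mod, Nat.mod_eq_of_lt i.isLt]

theorem exists_eq_groupNode {m : Fin n} (hm : (m : ℕ) < η * t) :
    ∃ j i, m = groupNode t η hηt j i := by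
  have ht : 0 < t := Nat.pos_of_mul_pos_left (Nat.zero_lt_of_lt hm)
  exact ⟨⟨m / t, (Nat.div_lt_iff_lt_mul ht).2 hm⟩, ⟨m % t, Nat.mod_lt _ ht⟩,
    Fin.ext (Nat.div_add_mod' _ _).symm⟩

end GroupNode

section Codeword

variable {F : Type*} [Field F] {n k : ℕ} {G : Matrix (Fin k) (Fin n) F}

theorem codewordSym_comp_injective_of_isUnit_det {cols : Fin k → Fin n}
    (hdet : IsUnit (Matrix.of fun i j : Fin k => G i (cols j)).det) :
    Function.Injective fun (u : Fin k → F) (a : Fin k) => codewordSym G u (cols a) :=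
  Matrix.vecMul_injective_of_isUnit ((Matrix.isUnit_iff_isUnit_det _).2 hdet)

theorem codewordSym_restrict_injective_of_isUnit_det
    (hMDS : ∀ cols : Fin k → Fin n, Function.Injective cols →
      IsUnit (Matrix.of fun i j : Fin k => G i (cols j)).det)
    {S : Finset (Fin n)} (hS : k ≤ S.card) :
    Function.Injective fun (u : Fin k → F) (p : {x : Fin n // x ∈ S}) => codewordSym G u p := by
  obtain ⟨T, hTS, hTcard⟩ := Finset.exists_subset_card_eq hS
  intro u v huv
  apply codewordSym_comp_injective_of_isUnit_det (hMDS _ (T.orderEmbOfFin hTcard).injective)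
  funext a
  exact congrFun huv ⟨_, hTS (T.orderEmbOfFin_mem hTcard a)⟩

end Codeword

section StoredC1

variable {F : Type*} [Field F] {n k t η : ℕ} (ht : 0 < t) (hηt : η * t ≤ n)
  (G : Matrix (Fin k) (Fin n) F) (e : Fin η → F)

theorem storedC1_of_le (s : Fin t → Fin k → F) {m : Fin n} (hm : η * t ≤ m) (ℓ : Fin t) :
    storedC1 t η ht hηt G e s m ℓ = codewordSym G (s ℓ) m :=
  dif_neg hm.not_gt

theorem storedC1_groupNode (s : Fin t → Fin k → F) (j : Fin η) (i ℓ : Fin t) :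
    storedC1 t η ht hηt G e s (groupNode t η hηt j i) ℓ =
      if ℓ < i then
        codewordSym G (s ℓ) (groupNode t η hηt j i) + codewordSym G (s i) (groupNode t η hηt j ℓ)
      else if ℓ = i then
        codewordSym G (s ℓ) (groupNode t η hηt j i)
      else
        codewordSym G (s ℓ) (groupNode t η hηt j i) +
          e j * codewordSym G (s i) (groupNode t η hηt j ℓ) := by
  rw [storedC1, dif_pos (groupNode_lt hηt j i)]
  simp only [groupNode_div, groupNode_mod, Fin.lt_def, Fin.ext_iff]
  rfl

theorem storedC1_groupNode_of_lt (s : Fin t → Fin k → F) (j : Fin η) {i ℓ : Fin t} (h : ℓ < i) :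
    storedC1 t η ht hηt G e s (groupNode t η hηt j i) ℓ =
      codewordSym G (s ℓ) (groupNode t η hηt j i) +
        codewordSym G (s i) (groupNode t η hηt j ℓ) := by
  rw [storedC1_groupNode, if_pos h]

theorem storedC1_groupNode_self (s : Fin t → Fin k → F) (j : Fin η) (i : Fin t) :
    storedC1 t η ht hηt G e s (groupNode t η hηt j i) i =
      codewordSym G (s i) (groupNode t η hηt j i) := by
  rw [storedC1_groupNode, if_neg (lt_irrefl i), if_pos rfl]

theorem storedC1_groupNode_of_gt (s : Fin t → Fin k → F) (j : Fin η) {i ℓ : Fin t} (h : i < ℓ) :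
    storedC1 t η ht hηt G e s (groupNode t η hηt j i) ℓ =
      codewordSym G (s ℓ) (groupNode t η hηt j i) +
        e j * codewordSym G (s i) (groupNode t η hηt j ℓ) := by
  rw [storedC1_groupNode, if_neg h.not_gt, if_neg h.ne']

variable {ht hηt G e} {s s' : Fin t → Fin k → F}

theorem codewordSym_groupNode_eq_of_lt {j : Fin η} (he : e j ≠ 1) {i ℓ : Fin t} (hlt : ℓ < i)
    (hi : storedC1 t η ht hηt G e s (groupNode t η hηt j i) ℓ =
      storedC1 t η ht hηt G e s' (groupNode t η hηt j i) ℓ)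
    (hℓ : storedC1 t η ht hηt G e s (groupNode t η hηt j ℓ) i =
      storedC1 t η ht hηt G e s' (groupNode t η hηt j ℓ) i) :
    codewordSym G (s ℓ) (groupNode t η hηt j i) = codewordSym G (s' ℓ) (groupNode t η hηt j i) ∧
      codewordSym G (s i) (groupNode t η hηt j ℓ) =
        codewordSym G (s' i) (groupNode t η hηt j ℓ) := by
  simp only [storedC1_groupNode_of_lt ht hηt G e _ j hlt] at hi
  simp only [storedC1_groupNode_of_gt ht hηt G e _ j hlt] at hℓ
  exact eq_and_eq_of_add_eq_of_add_mul_eq he hi hℓ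

theorem codewordSym_groupNode_eq_of_storedC1_eq {j : Fin η} (he : e j ≠ 1)
    (h : ∀ i ℓ, storedC1 t η ht hηt G e s (groupNode t η hηt j i) ℓ =
      storedC1 t η ht hηt G e s' (groupNode t η hηt j i) ℓ) (i ℓ : Fin t) :
    codewordSym G (s ℓ) (groupNode t η hηt j i) =
      codewordSym G (s' ℓ) (groupNode t η hηt j i) := by
  rcases lt_trichotomy ℓ i with hlt | rfl | hgt
  · exact (codewordSym_groupNode_eq_of_lt he hlt (h i ℓ) (h ℓ i)).1
  · simpa only [storedC1_groupNode_self] using h ℓ ℓ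
  · exact (codewordSym_groupNode_eq_of_lt he hgt (h ℓ i) (h i ℓ)).2

theorem codewordSym_eq_of_storedC1_eq (he : ∀ j, e j ≠ 1) {S : Finset (Fin n)}
    (hSgroups : ∀ j : Fin η, (∀ i : Fin t, groupNode t η hηt j i ∈ S) ∨
      (∀ i : Fin t, groupNode t η hηt j i ∉ S))
    (h : ∀ m ∈ S, ∀ ℓ, storedC1 t η ht hηt G e s m ℓ = storedC1 t η ht hηt G e s' m ℓ)
    {m : Fin n} (hm : m ∈ S) (ℓ : Fin t) : codewordSym G (s ℓ) m = codewordSym G (s' ℓ) m := by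
  rcases lt_or_ge (m : ℕ) (η * t) with hlt | hge
  · obtain ⟨j, i, rfl⟩ := exists_eq_groupNode hηt hlt
    have hgroup : ∀ i, groupNode t η hηt j i ∈ S :=
      (hSgroups j).resolve_right fun hdisj => hdisj i hm
    exact codewordSym_groupNode_eq_of_storedC1_eq (he j) (fun i => h _ (hgroup i)) i ℓ
  · simpa only [storedC1_of_le ht hηt G e _ hge] using h m hm ℓ

end StoredC1

theorem stmt_8_general {F : Type*} [Field F] {n k t η : ℕ} (ht : 0 < t) (hηt : η * t ≤ n)
    (G : Matrix (Fin k) (Fin n) F) (e : Fin η → F) (he : ∀ j, e j ≠ 1) (S : Finset (Fin n))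
    (hS : Function.Injective fun (u : Fin k → F) (p : {x : Fin n // x ∈ S}) => codewordSym G u p)
    (hSgroups : ∀ j : Fin η, (∀ i : Fin t, groupNode t η hηt j i ∈ S) ∨
      (∀ i : Fin t, groupNode t η hηt j i ∉ S)) :
    Function.Injective (fun s : Fin t → Fin k → F =>
      fun (p : {x : Fin n // x ∈ S}) (ℓ : Fin t) => storedC1 t η ht hηt G e s p.1 ℓ) := by
  intro s s' hstored
  have hsym : ∀ m ∈ S, ∀ ℓ, codewordSym G (s ℓ) m = codewordSym G (s' ℓ) m := fun _ hm ℓ =>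
    codewordSym_eq_of_storedC1_eq he hSgroups (fun m hm => congrFun (congrFun hstored ⟨m, hm⟩)) hm ℓ
  funext ℓ
  exact hS (funext fun p => hsym p p.2 ℓ)

/-- Lemma 3 of the paper: if a set `S` of `k` nodes of the transformed code
`C₁(n,k,η,t)` (with mixing coefficients `e_j ∉ {0,1}`) is a union of complete groups
together with nodes among the last `n − η·t` nodes — i.e. every group is either
contained in `S` or disjoint from `S` — then the nodes of `S` can decode all `t·k`
data symbols: the linear map from the message array to the symbols stored in the
nodes of `S` is injective, whatever the specific values of `e_1,…,e_η`. -/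
theorem stmt_8 {F : Type*} [Field F] (n k d : ℕ) (hk : 1 ≤ k) (hd1 : k + 1 ≤ d)
    (hd2 : d + 1 ≤ n) (t η : ℕ) (htdef : t = d - k + 1)
    (hηdef : η = (n - k - 1) / (d - k)) (ht : 0 < t) (hηt : η * t ≤ n)
    (G : Matrix (Fin k) (Fin n) F)
    (hMDS : ∀ cols : Fin k → Fin n, Function.Injective cols →
      IsUnit (Matrix.of fun i j : Fin k => G i (cols j)).det)
    (e : Fin η → F) (he : ∀ j, e j ≠ 0 ∧ e j ≠ 1)
    (S : Finset (Fin n)) (hScard : S.card = k)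
    (hSgroups : ∀ j : Fin η, (∀ i : Fin t, groupNode t η hηt j i ∈ S) ∨
      (∀ i : Fin t, groupNode t η hηt j i ∉ S)) :
    Function.Injective (fun s : Fin t → Fin k → F =>
      fun (p : {x : Fin n // x ∈ S}) (ℓ : Fin t) => storedC1 t η ht hηt G e s p.1 ℓ) := by
  exact stmt_8_general ht hηt G e (fun j => (he j).2) S
    (codewordSym_restrict_injective_of_isUnit_det hMDS hScard.ge) hSgroups
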